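/- Let α ≥ 1, β ≥ 1 and N ≥ 2 be integers with gcd(β, N) = 1. In R = ℂ[[x_1,x_2,y_1,y_2]] let I_Δ be the ideal generated by x_1 − y_1, x_1^α x_2^β − y_1^α y_2^β and x_2^N − y_2^N. Let T^s = { m·min(N,β) : m ∈ ℕ } ∪ { n ∈ ℕ : n ≥ max(N,β) }. Then for every (a,b) ∈ ℕ², the element x_1^a x_2^b − y_1^a y_2^b is integral over I_Δ if and only if N divides b, or (a ≥ α and b ∈ T^s). -/

import Mathlib

/-- An element `f` of a commutative ring is *integral over the ideal* `I` if it satisfies an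
equation `f ^ m + a 1 * f ^ (m-1) + ⋯ + a (m-1) * f + a m = 0` with `a j ∈ I ^ j`. -/
def IsIntegralOverIdeal {R : Type*} [CommRing R] (I : Ideal R) (f : R) : Prop :=
  ∃ m : ℕ, 0 < m ∧ ∃ a : ℕ → R, (∀ j, 1 ≤ j → j ≤ m → a j ∈ I ^ j) ∧
    f ^ m + ∑ j ∈ Finset.Icc 1 m, a j * f ^ (m - j) = 0

/-!
Necessity: for a primitive `N`-th or `β`-th root of unity `ζ`, pull back along the arcs
`t ↦ (t ^ p, ζ * t ^ q, t ^ p, t ^ q)`. Along such an arc `x₁ ^ a * x₂ ^ b - y₁ ^ a * y₂ ^ b`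
becomes `(ζ ^ b - 1) * t ^ (p * a + q * b)`, and integrality over an ideal `(t ^ k)` of power
series in one variable is divisibility by `t ^ k`; letting the weights `p`, `q` vary bounds `a`
and `b` separately.

Sufficiency: modulo `x₁ - y₁` only elements `x ^ a * (u ^ b - v ^ b)` matter. For coprime `β` and
`N` the ideal generated by `(u ^ β - v ^ β) / (u - v)` and `(u ^ N - v ^ N) / (u - v)` contains
`(u, v) ^ (β + N - 2)`. Hence for `b ≥ max N β` multiplication by `x ^ a * (u ^ b - v ^ b)` maps
`(u, v) ^ (b - 1)` into `I * (u, v) ^ (b - 1)`, and the determinant trick gives integrality.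
-/

section IntegralDependence

variable {R S : Type*} [CommRing R] [CommRing S] {I J : Ideal R} {f : R}

theorem isIntegralOverIdeal_of_mem (hf : f ∈ I) : IsIntegralOverIdeal I f := by
  refine ⟨1, one_pos, fun _ ↦ -f, fun j hj₁ hj₂ ↦ ?_, by simp⟩
  rw [le_antisymm hj₂ hj₁, pow_one]
  exact I.neg_mem hf

theorem IsIntegralOverIdeal.map (φ : R →+* S) (h : IsIntegralOverIdeal I f) :
    IsIntegralOverIdeal (I.map φ) (φ f) := by
  obtain ⟨m, hm, a, ha, heq⟩ := h
  refine ⟨m, hm, fun j ↦ φ (a j), fun j hj₁ hj₂ ↦ ?_, ?_⟩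
  · rw [← Ideal.map_pow]
    exact Ideal.mem_map_of_mem φ (ha j hj₁ hj₂)
  · simpa only [map_add, map_sum, map_mul, map_pow, map_zero] using congrArg φ heq

theorem IsIntegralOverIdeal.mono (hIJ : I ≤ J) (h : IsIntegralOverIdeal I f) :
    IsIntegralOverIdeal J f := by
  obtain ⟨m, hm, a, ha, heq⟩ := h
  exact ⟨m, hm, a, fun j hj₁ hj₂ ↦ Ideal.pow_right_mono hIJ j (ha j hj₁ hj₂), heq⟩

theorem isIntegral_of_pow_add_sum_eq_zero [Algebra R S] {m : ℕ} {c : ℕ → R} {y : S}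
    (h : y ^ m + ∑ j ∈ Finset.Icc 1 m, algebraMap R S (c j) * y ^ (m - j) = 0) :
    IsIntegral R y := by
  refine ⟨Polynomial.X ^ m + ∑ j ∈ Finset.Icc 1 m, Polynomial.C (c j) * Polynomial.X ^ (m - j),
    Polynomial.monic_X_pow_add ((Polynomial.degree_sum_le _ _).trans_lt ?_), ?_⟩
  · refine (Finset.sup_lt_iff (WithBot.bot_lt_coe m)).mpr fun j hj ↦ ?_
    have hj := Finset.mem_Icc.mp hj
    exact (Polynomial.degree_C_mul_X_pow_le _ _).trans_lt (Nat.cast_lt.mpr (by omega))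
  · simpa [Polynomial.eval₂_finsetSum] using h

theorem IsIntegralOverIdeal.dvd [IsDomain R] [IsIntegrallyClosed R] {π : R}
    (h : IsIntegralOverIdeal (Ideal.span {π}) f) : π ∣ f := by
  obtain ⟨m, -, a, ha, heq⟩ := h
  have ha_dvd (j : ℕ) (hj : j ∈ Finset.Icc 1 m) : π ^ j ∣ a j := by
    rw [← Ideal.mem_span_singleton, ← Ideal.span_singleton_pow]
    exact ha j (Finset.mem_Icc.mp hj).1 (Finset.mem_Icc.mp hj).2
  choose! c hc using ha_dvd
  rcases eq_or_ne π 0 with rfl | hπ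
  · have hsum : ∑ j ∈ Finset.Icc 1 m, a j * f ^ (m - j) = 0 := Finset.sum_eq_zero fun j hj ↦ by
      rw [hc j hj, zero_pow (Nat.one_le_iff_ne_zero.mp (Finset.mem_Icc.mp hj).1), zero_mul,
        zero_mul]
    rw [hsum, add_zero] at heq
    rw [eq_zero_of_pow_eq_zero heq]
  let F := FractionRing R
  have hπF : algebraMap R F π ≠ 0 := by simpa using hπ
  obtain ⟨y, hy⟩ : ∃ y : F, algebraMap R F f = algebraMap R F π * y :=
    ⟨_, (mul_div_cancel₀ _ hπF).symm⟩
  have hy_int : IsIntegral R y := by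
    apply isIntegral_of_pow_add_sum_eq_zero (m := m) (c := c)
    refine (mul_eq_zero.mp ?_).resolve_left (pow_ne_zero m hπF)
    have heqF := congrArg (algebraMap R F) heq
    simp only [map_add, map_sum, map_mul, map_pow, map_zero, hy] at heqF
    rw [← heqF, mul_add, mul_pow, Finset.mul_sum]
    congr 1
    refine Finset.sum_congr rfl fun j hj ↦ ?_
    rw [hc j hj, map_mul, map_pow, mul_pow, ← pow_mul_pow_sub _ (Finset.mem_Icc.mp hj).2]
    ring
  obtain ⟨g, rfl⟩ := IsIntegrallyClosed.isIntegral_iff.mp hy_int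
  exact ⟨g, IsFractionRing.injective R F (by rw [hy, map_mul])⟩

theorem isIntegralOverIdeal_of_monic {p : Polynomial R} (hp : p.Monic)
    (hcoeff : ∀ k, p.coeff k ∈ I ^ (p.natDegree - k)) (hroot : p.eval f = 0) :
    IsIntegralOverIdeal I f := by
  rcases Nat.eq_zero_or_pos p.natDegree with hdeg | hdeg
  · rw [hp.natDegree_eq_zero.mp hdeg, Polynomial.eval_one] at hroot
    exact isIntegralOverIdeal_of_mem (by rw [← one_mul f, hroot, zero_mul]; exact I.zero_mem)
  refine ⟨p.natDegree, hdeg, fun j ↦ p.coeff (p.natDegree - j), fun j _ hj ↦ ?_, ?_⟩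
  · simpa only [Nat.sub_sub_self hj] using hcoeff (p.natDegree - j)
  · rw [Polynomial.eval_eq_sum_range, Finset.sum_range_succ, hp.coeff_natDegree, one_mul] at hroot
    rw [← hroot, add_comm]
    congr 1
    refine Finset.sum_nbij' (p.natDegree - ·) (p.natDegree - ·) ?_ ?_ ?_ ?_ (fun _ _ ↦ rfl)
    all_goals intro j hj; simp only [Finset.mem_Icc, Finset.mem_range] at hj ⊢; omega

-- Cayley–Hamilton, with the powers of `I` recorded in the coefficients of the polynomial.
theorem isIntegralOverIdeal_of_smul_mem {M : Type*} [AddCommGroup M] [Module R M]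
    [Module.Finite R M] [FaithfulSMul R M] (h : ∀ w : M, f • w ∈ I • (⊤ : Submodule R M)) :
    IsIntegralOverIdeal I f := by
  obtain ⟨p, hp, -, hcoeff, hroot⟩ :=
    LinearMap.exists_monic_and_natDegree_eq_and_coeff_mem_pow_and_aeval_eq_zero R
      (algebraMap R (Module.End R M) f) I (by rintro _ ⟨w, rfl⟩; exact h w)
  refine isIntegralOverIdeal_of_monic hp hcoeff (FaithfulSMul.eq_of_smul_eq_smul (α := M) ?_)
  intro w
  rw [Polynomial.aeval_algebraMap_apply_eq_algebraMap_eval] at hroot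
  rw [zero_smul, ← Module.algebraMap_end_apply R R M, hroot, LinearMap.zero_apply]

theorem isIntegralOverIdeal_of_mul_mem (hJ : J.FG) {r : R} (hrJ : r ∈ J)
    (hr : r ∈ nonZeroDivisors R) (h : ∀ w ∈ J, f * w ∈ I * J) :
    IsIntegralOverIdeal I f := by
  have : Module.Finite R J := Module.Finite.iff_fg.mpr hJ
  have : FaithfulSMul R J := ⟨fun {s t} hst ↦ by
    have hr_eq : s * r = t * r := congrArg Subtype.val (hst ⟨r, hrJ⟩)
    exact (mul_cancel_right_mem_nonZeroDivisors hr).mp hr_eq⟩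
  refine isIntegralOverIdeal_of_smul_mem (M := J) fun w ↦ ?_
  rw [Submodule.mem_smul_top_iff]
  exact h w w.2

end IntegralDependence

section GeomSum

variable {R : Type*} [CommRing R]

/-- The quotient `(u ^ n - v ^ n) / (u - v)`, a binary form of degree `n - 1`. -/
def geomSum₂ (u v : R) (n : ℕ) : R :=
  ∑ i ∈ Finset.range n, u ^ i * v ^ (n - 1 - i)

theorem geomSum₂_mul (u v : R) (n : ℕ) : geomSum₂ u v n * (u - v) = u ^ n - v ^ n :=
  (Commute.all u v).geom_sum₂_mul n

theorem geomSum₂_one (u v : R) : geomSum₂ u v 1 = 1 := by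
  simp [geomSum₂]

theorem geomSum₂_add (u v : R) (m n : ℕ) :
    geomSum₂ u v (m + n) = u ^ m * geomSum₂ u v n + v ^ n * geomSum₂ u v m := by
  simp only [geomSum₂]
  rw [Finset.sum_range_add, add_comm, Finset.mul_sum, Finset.mul_sum]
  congr 1 <;> refine Finset.sum_congr rfl fun i hi ↦ ?_
  · rw [show m + n - 1 - (m + i) = n - 1 - i by omega, pow_add, mul_assoc]
  · have hi := Finset.mem_range.mp hi
    rw [show m + n - 1 - i = n + (m - 1 - i) by omega, pow_add]
    ring

theorem geomSum₂_mem_pow {𝔪 : Ideal R} {u v : R} (hu : u ∈ 𝔪) (hv : v ∈ 𝔪) (n : ℕ) :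
    geomSum₂ u v n ∈ 𝔪 ^ (n - 1) := by
  refine Ideal.sum_mem _ fun i hi ↦ ?_
  have hi := Finset.mem_range.mp hi
  rw [← Nat.add_sub_cancel' (show i ≤ n - 1 by omega), pow_add, Nat.add_sub_cancel_left]
  exact Ideal.mul_mem_mul (Ideal.pow_mem_pow hu _) (Ideal.pow_mem_pow hv _)

theorem sup_pow_add_add_one_le (I J : Ideal R) (m n : ℕ) :
    (I ⊔ J) ^ (m + n + 1) ≤ I ^ (m + 1) * (I ⊔ J) ^ n ⊔ J ^ (n + 1) * (I ⊔ J) ^ m := by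
  have hmixed (i j k : ℕ) (hk : i + j = k) : I ^ i * J ^ j ≤ (I ⊔ J) ^ k := by
    rw [← hk, pow_add]
    exact mul_le_mul' (Ideal.pow_right_mono le_sup_left i) (Ideal.pow_right_mono le_sup_right j)
  rw [← Submodule.add_eq_sup I J, add_pow, Ideal.sum_eq_sup]
  refine Finset.sup_le fun i hi ↦ Ideal.mul_le_left.trans ?_
  have hi := Finset.mem_range.mp hi
  rcases le_or_gt (m + 1) i with hmi | hmi
  · rw [← pow_mul_pow_sub I hmi, mul_assoc]
    exact le_sup_of_le_left (Ideal.mul_mono_right (hmixed _ _ _ (by omega)))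
  · rw [← pow_mul_pow_sub J (show n + 1 ≤ m + n + 1 - i by omega), mul_left_comm]
    exact le_sup_of_le_right (Ideal.mul_mono_right (hmixed _ _ _ (by omega)))

theorem span_geomSum₂_mul_span_pair_pow_le (u v : R) (p r : ℕ) :
    Ideal.span {geomSum₂ u v (r + 1)} * Ideal.span {u, v} ^ (2 * p + 1) ≤
      Ideal.span {geomSum₂ u v (p + 1)} * Ideal.span {u, v} ^ (p + r + 1) ⊔
      Ideal.span {geomSum₂ u v (p + r + 2)} * Ideal.span {u, v} ^ p := by
  set 𝔪 := Ideal.span {u, v} with h𝔪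
  have hu : u ∈ 𝔪 := Ideal.subset_span (by simp)
  have hv : v ∈ 𝔪 := Ideal.subset_span (by simp)
  have hgen {x y : R} (hy : y ∈ 𝔪) (hxy : geomSum₂ u v (p + r + 2) =
      x ^ (p + 1) * geomSum₂ u v (r + 1) + y ^ (r + 1) * geomSum₂ u v (p + 1)) :
      Ideal.span {geomSum₂ u v (r + 1)} * (Ideal.span {x} ^ (p + 1) * 𝔪 ^ p) ≤
        Ideal.span {geomSum₂ u v (p + 1)} * 𝔪 ^ (p + r + 1) ⊔
        Ideal.span {geomSum₂ u v (p + r + 2)} * 𝔪 ^ p := by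
    have hmem : geomSum₂ u v (r + 1) * x ^ (p + 1) ∈
        Ideal.span {geomSum₂ u v (p + 1)} * 𝔪 ^ (r + 1) ⊔
          Ideal.span {geomSum₂ u v (p + r + 2)} := by
      rw [show geomSum₂ u v (r + 1) * x ^ (p + 1) =
        geomSum₂ u v (p + r + 2) - geomSum₂ u v (p + 1) * y ^ (r + 1) by rw [hxy]; ring]
      exact Ideal.sub_mem _ (Ideal.mem_sup_right (Ideal.mem_span_singleton_self _))
        (Ideal.mem_sup_left (Ideal.mul_mem_mul (Ideal.mem_span_singleton_self _)
          (Ideal.pow_mem_pow hy _)))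
    calc Ideal.span {geomSum₂ u v (r + 1)} * (Ideal.span {x} ^ (p + 1) * 𝔪 ^ p)
        = Ideal.span {geomSum₂ u v (r + 1) * x ^ (p + 1)} * 𝔪 ^ p := by
          rw [← mul_assoc, Ideal.span_singleton_pow, Ideal.span_singleton_mul_span_singleton]
      _ ≤ _ := Ideal.mul_mono_left ((Ideal.span_singleton_le_iff_mem _).mpr hmem)
      _ = _ := by rw [Ideal.sup_mul, mul_assoc, ← pow_add]; congr 3; ring
  have hpow : 𝔪 ^ (2 * p + 1) ≤
      Ideal.span {u} ^ (p + 1) * 𝔪 ^ p ⊔ Ideal.span {v} ^ (p + 1) * 𝔪 ^ p := by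
    rw [h𝔪, Ideal.span_insert, two_mul]
    exact sup_pow_add_add_one_le _ _ p p
  refine (Ideal.mul_mono_right hpow).trans ?_
  rw [Ideal.mul_sup]
  refine sup_le (hgen hv ?_) (hgen hu ?_)
  · rw [← geomSum₂_add, show p + 1 + (r + 1) = p + r + 2 by ring]
  · rw [add_comm (v ^ _ * _), ← geomSum₂_add, show r + 1 + (p + 1) = p + r + 2 by ring]

-- The induction is the subtractive Euclidean algorithm on the pair `(p + 1, q + 1)`.
theorem span_pair_pow_le_of_coprime (u v : R) (p q : ℕ) (hpq : (p + 1).Coprime (q + 1)) :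
    Ideal.span {u, v} ^ (p + q) ≤
      Ideal.span {geomSum₂ u v (p + 1)} * Ideal.span {u, v} ^ q ⊔
      Ideal.span {geomSum₂ u v (q + 1)} * Ideal.span {u, v} ^ p := by
  induction hs : p + q using Nat.strong_induction_on generalizing p q with | _ s ih
  subst hs
  set 𝔪 := Ideal.span {u, v}
  wlog hle : p ≤ q generalizing p q
  · rw [sup_comm, add_comm p q]
    exact this q p hpq.symm (fun s hs ↦ ih s (by omega)) (by omega)
  rcases hle.eq_or_lt with rfl | hlt
  · obtain rfl : p = 0 := by simpa using hpq
    simp [geomSum₂_one]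
  obtain ⟨r, rfl⟩ : ∃ r, q = p + r + 1 := ⟨q - p - 1, by omega⟩
  have hpr : (p + 1).Coprime (r + 1) := by
    rwa [show p + r + 1 + 1 = (r + 1) + (p + 1) by ring, Nat.coprime_add_self_right] at hpq
  calc 𝔪 ^ (p + (p + r + 1))
      = 𝔪 ^ (p + 1) * 𝔪 ^ (p + r) := by ring
    _ ≤ 𝔪 ^ (p + 1) * (Ideal.span {geomSum₂ u v (p + 1)} * 𝔪 ^ r ⊔
          Ideal.span {geomSum₂ u v (r + 1)} * 𝔪 ^ p) :=
        Ideal.mul_mono_right (ih _ (by omega) p r hpr rfl)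
    _ = Ideal.span {geomSum₂ u v (p + 1)} * 𝔪 ^ (p + r + 1) ⊔
          Ideal.span {geomSum₂ u v (r + 1)} * 𝔪 ^ (2 * p + 1) := by
        rw [Ideal.mul_sup]; congr 1 <;> ring
    _ ≤ _ := sup_le le_sup_left (span_geomSum₂_mul_span_pair_pow_le u v p r)

theorem span_pair_pow_add_self_le_of_coprime (u v : R) {m n D : ℕ} (hmn : m.Coprime n)
    (hm₀ : m ≠ 0) (hn₀ : n ≠ 0) (hm : m ≤ D + 1) (hn : n ≤ D + 1) :
    Ideal.span {u, v} ^ (D + D) ≤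
      Ideal.span {geomSum₂ u v m, geomSum₂ u v n} * Ideal.span {u, v} ^ D := by
  obtain ⟨p, rfl⟩ := Nat.exists_eq_succ_of_ne_zero hm₀
  obtain ⟨q, rfl⟩ := Nat.exists_eq_succ_of_ne_zero hn₀
  set 𝔪 := Ideal.span {u, v}
  rw [Ideal.span_insert, Ideal.sup_mul]
  calc 𝔪 ^ (D + D)
      = 𝔪 ^ (D + D - (p + q)) * 𝔪 ^ (p + q) := by rw [← pow_add]; congr 1; omega
    _ ≤ 𝔪 ^ (D + D - (p + q)) * (Ideal.span {geomSum₂ u v (p + 1)} * 𝔪 ^ q ⊔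
          Ideal.span {geomSum₂ u v (q + 1)} * 𝔪 ^ p) :=
        Ideal.mul_mono_right (span_pair_pow_le_of_coprime u v p q hmn)
    _ ≤ _ := by
        rw [Ideal.mul_sup, mul_left_comm, ← pow_add, mul_left_comm, ← pow_add]
        exact sup_le_sup (Ideal.mul_mono_right (Ideal.pow_le_pow_right (by omega)))
          (Ideal.mul_mono_right (Ideal.pow_le_pow_right (by omega)))

end GeomSum

section Sufficiency

variable {R : Type*} [CommRing R] {I : Ideal R} {x y u v : R} {α β N a b : ℕ}

theorem span_mul_pow_sub_pow_mul_le (hβ₀ : β ≠ 0) (hN₀ : N ≠ 0) (hβN : β.Coprime N)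
    (hβ : x * (u ^ β - v ^ β) ∈ I) (hN : x * (u ^ N - v ^ N) ∈ I) (hb : max N β ≤ b) :
    Ideal.span {x * (u ^ b - v ^ b)} * Ideal.span {u, v} ^ (b - 1) ≤
      I * Ideal.span {u, v} ^ (b - 1) := by
  obtain ⟨hNb, hβb⟩ := max_le_iff.mp hb
  set 𝔪 := Ideal.span {u, v} with h𝔪
  have hfactor (n : ℕ) : x * (u ^ n - v ^ n) = x * (u - v) * geomSum₂ u v n := by
    rw [← geomSum₂_mul]; ring
  rw [hfactor] at hβ hN
  have hquot : Ideal.span {geomSum₂ u v b} ≤ 𝔪 ^ (b - 1) :=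
    (Ideal.span_singleton_le_iff_mem _).mpr <|
      geomSum₂_mem_pow (Ideal.subset_span (by simp)) (Ideal.subset_span (by simp)) b
  have hgens :
      Ideal.span {x * (u - v)} * Ideal.span {geomSum₂ u v β, geomSum₂ u v N} ≤ I := by
    rw [Ideal.span_insert, Ideal.mul_sup, Ideal.span_singleton_mul_span_singleton,
      Ideal.span_singleton_mul_span_singleton]
    exact sup_le ((Ideal.span_singleton_le_iff_mem I).mpr hβ)
      ((Ideal.span_singleton_le_iff_mem I).mpr hN)
  calc Ideal.span {x * (u ^ b - v ^ b)} * 𝔪 ^ (b - 1)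
      = Ideal.span {x * (u - v)} * (Ideal.span {geomSum₂ u v b} * 𝔪 ^ (b - 1)) := by
        rw [hfactor, ← Ideal.span_singleton_mul_span_singleton, mul_assoc]
    _ ≤ Ideal.span {x * (u - v)} * 𝔪 ^ ((b - 1) + (b - 1)) := by
        rw [pow_add]
        exact Ideal.mul_mono_right (Ideal.mul_mono_left hquot)
    _ ≤ Ideal.span {x * (u - v)} *
          (Ideal.span {geomSum₂ u v β, geomSum₂ u v N} * 𝔪 ^ (b - 1)) :=
        Ideal.mul_mono_right <|
          span_pair_pow_add_self_le_of_coprime u v hβN hβ₀ hN₀ (by omega) (by omega)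
    _ ≤ I * 𝔪 ^ (b - 1) := by
        rw [← mul_assoc]
        exact Ideal.mul_mono_left hgens

theorem mul_pow_sub_pow_mem_of_dvd {n : ℕ} (h : x * (u ^ n - v ^ n) ∈ I) (hnb : n ∣ b) :
    x * (u ^ b - v ^ b) ∈ I := by
  obtain ⟨k, rfl⟩ := hnb
  rw [pow_mul, pow_mul]
  exact Ideal.mem_of_dvd I (mul_dvd_mul_left x (sub_dvd_pow_sub_pow _ _ k)) h

theorem mul_pow_sub_mul_pow_sub_mem (hxy : x - y ∈ I) (a b : ℕ) :
    (x ^ a * u ^ b - y ^ a * v ^ b) - x ^ a * (u ^ b - v ^ b) ∈ I := by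
  have hmem : (x ^ a - y ^ a) * v ^ b ∈ I :=
    I.mul_mem_right _ (I.mem_of_dvd (sub_dvd_pow_sub_pow x y a) hxy)
  convert hmem using 1
  ring

theorem mul_pow_sub_mul_pow_mem_iff (hxy : x - y ∈ I) :
    x ^ a * u ^ b - y ^ a * v ^ b ∈ I ↔ x ^ a * (u ^ b - v ^ b) ∈ I := by
  have h := I.add_mem_iff_right (b := x ^ a * (u ^ b - v ^ b))
    (mul_pow_sub_mul_pow_sub_mem (u := u) (v := v) hxy a b)
  rwa [sub_add_cancel] at h

theorem isIntegralOverIdeal_of_max_le (hu : u ∈ nonZeroDivisors R) (hβ₀ : β ≠ 0) (hN₀ : N ≠ 0)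
    (hβN : β.Coprime N) (hxy : x - y ∈ I) (hβ : x ^ a * (u ^ β - v ^ β) ∈ I)
    (hN : x ^ a * (u ^ N - v ^ N) ∈ I) (hb : max N β ≤ b) :
    IsIntegralOverIdeal I (x ^ a * u ^ b - y ^ a * v ^ b) := by
  have hu𝔪 : u ∈ Ideal.span {u, v} := Ideal.subset_span (by simp)
  refine isIntegralOverIdeal_of_mul_mem (J := Ideal.span {u, v} ^ (b - 1))
    (Ideal.FG.pow (Submodule.fg_span (by simp))) (Ideal.pow_mem_pow hu𝔪 _) (pow_mem hu _)
    fun w hw ↦ ?_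
  rw [← sub_add_cancel (x ^ a * u ^ b - y ^ a * v ^ b) (x ^ a * (u ^ b - v ^ b)), add_mul]
  exact add_mem (Ideal.mul_mem_mul (mul_pow_sub_mul_pow_sub_mem hxy a b) hw)
    (Ideal.span_singleton_mul_le_iff.mp
      (span_mul_pow_sub_pow_mul_le hβ₀ hN₀ hβN hβ hN hb) w hw)

theorem isIntegralOverIdeal_of_dvd_or (hu : u ∈ nonZeroDivisors R) (hβ₀ : β ≠ 0) (hN₀ : N ≠ 0)
    (hβN : β.Coprime N) (hxy : x - y ∈ I) (hβ : x ^ α * u ^ β - y ^ α * v ^ β ∈ I)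
    (hN : u ^ N - v ^ N ∈ I)
    (hab : N ∣ b ∨ α ≤ a ∧ ((∃ m, b = m * min N β) ∨ max N β ≤ b)) :
    IsIntegralOverIdeal I (x ^ a * u ^ b - y ^ a * v ^ b) := by
  have hNa : x ^ a * (u ^ N - v ^ N) ∈ I := I.mul_mem_left _ hN
  have of_dvd (n : ℕ) (hn : x ^ a * (u ^ n - v ^ n) ∈ I) (hnb : n ∣ b) :
      IsIntegralOverIdeal I (x ^ a * u ^ b - y ^ a * v ^ b) :=
    isIntegralOverIdeal_of_mem <|
      (mul_pow_sub_mul_pow_mem_iff hxy).mpr (mul_pow_sub_pow_mem_of_dvd hn hnb)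
  rcases hab with hNb | ⟨ha, hb⟩
  · exact of_dvd N hNa hNb
  have hβa : x ^ a * (u ^ β - v ^ β) ∈ I :=
    Ideal.mem_of_dvd I (mul_dvd_mul_right (pow_dvd_pow x ha) _)
      ((mul_pow_sub_mul_pow_mem_iff hxy).mp hβ)
  rcases hb with ⟨m, hm⟩ | hb
  · refine of_dvd (min N β) ?_ (Dvd.intro_left m hm.symm)
    rcases min_choice N β with h | h <;> rwa [h]
  · exact isIntegralOverIdeal_of_max_le hu hβ₀ hN₀ hβN hxy hβa hNa hb

end Sufficiency

section FormalArcs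

open MvPowerSeries in
theorem exists_ringHom_powerSeries_X {σ K L : Type*} [Finite σ] [CommRing K] [CommRing L]
    [Algebra K L] (s : σ → PowerSeries L) (hs : ∀ i, PowerSeries.constantCoeff (s i) = 0) :
    ∃ φ : MvPowerSeries σ K →+* PowerSeries L, ∀ i, φ (X i) = s i :=
  have hsubst : HasSubst (S := L) s := hasSubst_of_constantCoeff_zero hs
  ⟨(substAlgHom (R := K) hsubst).toRingHom, substAlgHom_X hsubst⟩

variable {K L : Type*} [CommRing K] [Field L] [Algebra K L]

open MvPowerSeries in
theorem exists_ringHom_twisted_arc (ζ : L) {p q : ℕ} (hp : p ≠ 0) (hq : q ≠ 0) :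
    ∃ φ : MvPowerSeries (Fin 4) K →+* PowerSeries L, ∀ c d : ℕ,
      φ (X 0 ^ c * X 1 ^ d - X 2 ^ c * X 3 ^ d) =
        PowerSeries.C (ζ ^ d - 1) * PowerSeries.X ^ (p * c + q * d) := by
  obtain ⟨φ, hφ⟩ := exists_ringHom_powerSeries_X (K := K)
    ![PowerSeries.X ^ p, PowerSeries.C ζ * PowerSeries.X ^ q, PowerSeries.X ^ p,
      PowerSeries.X ^ q] (by simp [Fin.forall_fin_succ, hp, hq])
  refine ⟨φ, fun c d ↦ ?_⟩
  simp only [map_sub, map_mul, map_pow, map_one, hφ, Matrix.cons_val]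
  ring

theorem le_and_le_of_forall_weight_le {a b c d : ℕ}
    (h : ∀ p q : ℕ, p ≠ 0 → q ≠ 0 → p * c + q * d ≤ p * a + q * b) : c ≤ a ∧ d ≤ b := by
  have hc := h (b + 1) 1 (by omega) one_ne_zero
  have hd := h 1 (a + 1) one_ne_zero (by omega)
  constructor <;> by_contra! hlt <;> nlinarith

end FormalArcs

section ToricHypersurface

open MvPowerSeries

/-- The ideal `I_Δ` cutting out the fibre product of the normalization
`(u, v) ↦ (u, u ^ α * v ^ β, v ^ N)` of the toric hypersurface with itself; the first copy of
`(u, v)` is `(X 0, X 1)`, the second is `(X 2, X 3)`. -/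
noncomputable def toricDiagonalIdeal (K : Type*) [CommRing K] (α β N : ℕ) :
    Ideal (MvPowerSeries (Fin 4) K) :=
  Ideal.span {X 0 - X 2, X 0 ^ α * X 1 ^ β - X 2 ^ α * X 3 ^ β, X 1 ^ N - X 3 ^ N}

variable {K L : Type*} [CommRing K] [Field L] [Algebra K L] {α β N : ℕ}

theorem exponents_le_of_isIntegralOverIdeal {a b : ℕ}
    (h : IsIntegralOverIdeal (toricDiagonalIdeal K α β N)
      (X 0 ^ a * X 1 ^ b - X 2 ^ a * X 3 ^ b))
    {ζ : L} (hζ : ζ ^ b ≠ 1) {c d : ℕ} (hβ : ζ ^ β = 1 ∨ c ≤ α ∧ d ≤ β)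
    (hN : ζ ^ N = 1 ∨ c = 0 ∧ d ≤ N) : c ≤ a ∧ d ≤ b := by
  refine le_and_le_of_forall_weight_le fun p q hp hq ↦ ?_
  obtain ⟨φ, hφ⟩ := exists_ringHom_twisted_arc (K := K) ζ hp hq
  have hdvd {e f : ℕ} (hef : ζ ^ f = 1 ∨ c ≤ e ∧ d ≤ f) :
      PowerSeries.X ^ (p * c + q * d) ∣ φ (X 0 ^ e * X 1 ^ f - X 2 ^ e * X 3 ^ f) := by
    rw [hφ]
    rcases hef with hf | ⟨he, hf⟩
    · simp [hf]
    · exact (pow_dvd_pow _ (by gcongr)).mul_left _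
  have hmap : (toricDiagonalIdeal K α β N).map φ ≤
      Ideal.span {PowerSeries.X ^ (p * c + q * d)} := by
    rw [toricDiagonalIdeal, Ideal.map_span, Ideal.span_le]
    rintro _ ⟨z, rfl | rfl | rfl, rfl⟩ <;> rw [SetLike.mem_coe, Ideal.mem_span_singleton]
    · have hφ₀ := hφ 1 0
      simp only [pow_one, pow_zero, mul_one, sub_self, map_zero, zero_mul] at hφ₀
      simp [hφ₀]
    · exact hdvd hβ
    · simpa using hdvd (e := 0) (f := N) (hN.imp_right (And.imp_left Eq.le))
  have hXdvd := ((h.map φ).mono hmap).dvd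
  rw [hφ, PowerSeries.X_pow_dvd_iff] at hXdvd
  by_contra! hlt
  have hcoeff := hXdvd _ hlt
  rw [PowerSeries.coeff_C_mul, PowerSeries.coeff_X_pow_self, mul_one, sub_eq_zero] at hcoeff
  exact hζ hcoeff

theorem dvd_or_of_isIntegralOverIdeal {a b : ℕ} {ζ ξ : L} (hζ : IsPrimitiveRoot ζ N)
    (hξ : IsPrimitiveRoot ξ β)
    (h : IsIntegralOverIdeal (toricDiagonalIdeal K α β N)
      (X 0 ^ a * X 1 ^ b - X 2 ^ a * X 3 ^ b)) :
    N ∣ b ∨ α ≤ a ∧ ((∃ m, b = m * min N β) ∨ max N β ≤ b) := by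
  by_cases hN_dvd : N ∣ b
  · exact Or.inl hN_dvd
  obtain ⟨hαa, hβb⟩ := exponents_le_of_isIntegralOverIdeal h
    (mt (hζ.pow_eq_one_iff_dvd b).mp hN_dvd) (Or.inr ⟨le_rfl, le_rfl⟩) (Or.inl hζ.pow_eq_one)
  refine Or.inr ⟨hαa, ?_⟩
  by_cases hβ_dvd : β ∣ b
  · rcases le_total N β with hNβ | hβN
    · exact Or.inr (max_le (hNβ.trans hβb) hβb)
    · exact Or.inl ⟨b / β, by rw [min_eq_right hβN, Nat.div_mul_cancel hβ_dvd]⟩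
  · obtain ⟨-, hNb⟩ := exponents_le_of_isIntegralOverIdeal h
      (mt (hξ.pow_eq_one_iff_dvd b).mp hβ_dvd) (Or.inl hξ.pow_eq_one) (Or.inr ⟨rfl, le_rfl⟩)
    exact Or.inr (max_le hNb hβb)

theorem saturation_of_toric_hypersurface_general [IsDomain K] (hgcd : β.Coprime N)
    (hβ : (β : K) ≠ 0) (hN : (N : K) ≠ 0) (a b : ℕ) :
    IsIntegralOverIdeal (toricDiagonalIdeal K α β N) (X 0 ^ a * X 1 ^ b - X 2 ^ a * X 3 ^ b) ↔
      N ∣ b ∨ α ≤ a ∧ ((∃ m, b = m * min N β) ∨ max N β ≤ b) := by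
  have exists_root {n : ℕ} (hn : (n : K) ≠ 0) :
      ∃ ζ : AlgebraicClosure (FractionRing K), IsPrimitiveRoot ζ n := by
    have : NeZero (n : FractionRing K) := ⟨by
      rwa [← map_natCast (algebraMap K (FractionRing K)), ne_eq,
        FaithfulSMul.algebraMap_eq_zero_iff]⟩
    exact HasEnoughRootsOfUnity.exists_primitiveRoot _ n
  obtain ⟨ζ, hζ⟩ := exists_root hN
  obtain ⟨ξ, hξ⟩ := exists_root hβ
  refine ⟨dvd_or_of_isIntegralOverIdeal hζ hξ, isIntegralOverIdeal_of_dvd_or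
    X_mem_nonzeroDivisors (by rintro rfl; simp at hβ) (by rintro rfl; simp at hN) hgcd ?_ ?_ ?_⟩
  all_goals exact Ideal.subset_span (by simp)

end ToricHypersurface

open MvPowerSeries in
/-- Computation of the Lipschitz saturation of the toric hypersurface `y^N - x^{αN} z^β = 0`:
in `ℂ[[x_1,x_2,y_1,y_2]]` (variables `x_1 = X 0`, `x_2 = X 1`, `y_1 = X 2`, `y_2 = X 3`) with
`I_Δ = ⟨x_1 - y_1, x_1^α x_2^β - y_1^α y_2^β, x_2^N - y_2^N⟩` and
`T^s = min(N,β)·ℕ ∪ [max(N,β), ∞)`, the element `x_1^a x_2^b - y_1^a y_2^b` is integral over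
`I_Δ` if and only if `N ∣ b`, or `a ≥ α` and `b ∈ T^s`. -/
theorem saturation_of_toric_hypersurface (α β N : ℕ)
    (hα : 1 ≤ α) (hβ : 1 ≤ β) (hN : 2 ≤ N) (hgcd : Nat.gcd β N = 1)
    (IΔ : Ideal (MvPowerSeries (Fin 4) ℂ))
    (hIΔ : IΔ = Ideal.span {X 0 - X 2, X 0 ^ α * X 1 ^ β - X 2 ^ α * X 3 ^ β,
      X 1 ^ N - X 3 ^ N})
    (Ts : Set ℕ)
    (hTs : Ts = {n | ∃ m : ℕ, n = m * min N β} ∪ {n | max N β ≤ n}) :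
    ∀ a b : ℕ,
      IsIntegralOverIdeal IΔ (X 0 ^ a * X 1 ^ b - X 2 ^ a * X 3 ^ b) ↔
        (N ∣ b ∨ (α ≤ a ∧ b ∈ Ts)) := by
  subst hIΔ hTs
  exact saturation_of_toric_hypersurface_general hgcd (Nat.cast_ne_zero.mpr (by omega))
    (Nat.cast_ne_zero.mpr (by omega))
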